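/- Let G be an achievement positional game. If Left has a winning (resp. non-losing) strategy on G as second player, then Left has a winning (resp. non-losing) strategy on G as first player. -/

import Mathlib

namespace APG

/-- The two players: Left and Right. -/
inductive Player : Type
  | L : Player
  | R : Player
deriving DecidableEq, Repr

/-- The opponent of a player. -/
def Player.other : Player → Player
  | .L => .R
  | .R => .L

/-- An achievement positional game: a finite vertex set together with the set of
blue edges (Left's winning sets) and the set of red edges (Right's winning sets). -/
structure Game : Type where
  V : Finset ℕ
  EL : Finset (Finset ℕ)
  ER : Finset (Finset ℕ)

/-- The edges are nonempty subsets of the vertex set. -/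
def WellFormed (G : Game) : Prop :=
  (∀ e ∈ G.EL, e ⊆ G.V ∧ e.Nonempty) ∧ (∀ e ∈ G.ER, e ⊆ G.V ∧ e.Nonempty)

/-- The winning sets of a given player. -/
def Game.edges (G : Game) : Player → Finset (Finset ℕ)
  | .L => G.EL
  | .R => G.ER

/-- The player who makes the `i`-th move (0-indexed) when `s` moves first. -/
def mover (s : Player) (i : ℕ) : Player := if i % 2 = 0 then s else s.other

/-- The set of vertices picked by player `p` along the history `h`
(the chronological list of the moves played so far), when `s` moved first. -/
def picked (s p : Player) (h : List ℕ) : Finset ℕ :=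
  ((Finset.range h.length).filter fun i => mover s i = p).image fun i => h.getD i 0

/-- The set `S` of picked vertices fills some edge of `E`. -/
def fills (E : Finset (Finset ℕ)) (S : Finset ℕ) : Prop := ∃ e ∈ E, e ⊆ S

/-- The game is over: some player has picked all the vertices of one of their edges. -/
def ended (G : Game) (s : Player) (h : List ℕ) : Prop :=
  fills G.EL (picked s .L h) ∨ fills G.ER (picked s .R h)

/-- `h` is a legal history: no vertex is picked twice, every picked vertex belongs to
the board, and no move is made after the game has ended. -/
def ValidHist (G : Game) (s : Player) (h : List ℕ) : Prop :=
  h.Nodup ∧ (∀ x ∈ h, x ∈ G.V) ∧ ∀ k, k < h.length → ¬ ended G s (h.take k)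

/-- A strategy: a map assigning to each position (history) a vertex to pick. -/
abbrev Strategy := List ℕ → ℕ

/-- Along `h`, every move of player `p` agrees with the strategy `σ`. -/
def Follows (s p : Player) (σ : Strategy) (h : List ℕ) : Prop :=
  ∀ k, k < h.length → mover s k = p → h.getD k 0 = σ (h.take k)

/-- A finished play: either the game has ended or all vertices have been picked. -/
def Complete (G : Game) (s : Player) (h : List ℕ) : Prop :=
  ended G s h ∨ h.length = G.V.card

/-- The strategy `σ` of player `p` always suggests a legal move (an unpicked vertex)
whenever the game is not over and it is `p`'s turn. -/
def Legal (G : Game) (s p : Player) (σ : Strategy) : Prop :=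
  ∀ h, ValidHist G s h → Follows s p σ h → ¬ ended G s h → h.length < G.V.card →
    mover s h.length = p → σ h ∈ G.V ∧ σ h ∉ h

/-- Player `p` has a winning strategy on `G` when `s` moves first: following it,
every finished play ends with `p` having filled one of their edges (and, the game
having ended right there, the opponent has not filled an edge first). -/
def WinsAs (G : Game) (s p : Player) : Prop :=
  ∃ σ : Strategy, Legal G s p σ ∧
    ∀ h, ValidHist G s h → Follows s p σ h → Complete G s h →
      fills (G.edges p) (picked s p h)

/-- Player `p` has a non-losing strategy on `G` when `s` moves first: following it,
the opponent never fills one of their edges. -/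
def NonLosingAs (G : Game) (s p : Player) : Prop :=
  ∃ σ : Strategy, Legal G s p σ ∧
    ∀ h, ValidHist G s h → Follows s p σ h → Complete G s h →
      ¬ fills (G.edges p.other) (picked s p.other h)

/-- The possible results of the game, for a fixed starting player. -/
inductive Result : Type
  | Lwin : Result
  | draw : Result
  | Rwin : Result
deriving DecidableEq, Repr

/-- The result of `G` with optimal play, when `s` moves first, is `r`:
a win for a player means that player has a winning strategy, a draw means
both players have non-losing strategies. -/
def resultIs (G : Game) (s : Player) : Result → Prop
  | .Lwin => WinsAs G s .L
  | .Rwin => WinsAs G s .R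
  | .draw => NonLosingAs G s .L ∧ NonLosingAs G s .R

/-- An outcome: the pair of results with optimal play
(when Left starts, when Right starts). -/
abbrev Outcome := Result × Result

/-- `G` has outcome `o`. -/
def hasOutcome (G : Game) (o : Outcome) : Prop :=
  resultIs G .L o.1 ∧ resultIs G .R o.2

/-- Numerical value of a result, from Left's point of view:
Right wins < draw < Left wins. -/
def Result.val : Result → ℕ
  | .Rwin => 0
  | .draw => 1
  | .Lwin => 2

/-- The partial order `≤_L` on outcomes, comparing both components simultaneously
from Left's point of view. -/
def outLE (o o' : Outcome) : Prop := o.1.val ≤ o'.1.val ∧ o.2.val ≤ o'.2.val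

def oL : Outcome := (.Lwin, .Lwin)
def oLminus : Outcome := (.Lwin, .draw)
def oN : Outcome := (.Lwin, .Rwin)
def oD : Outcome := (.draw, .draw)
def oRminus : Outcome := (.draw, .Rwin)
def oR : Outcome := (.Rwin, .Rwin)

/-- The updated game `G_u` after Left has picked `u`. -/
def subL (G : Game) (u : ℕ) : Game where
  V := G.V.erase u
  EL := G.EL.image fun e => e.erase u
  ER := G.ER.filter fun e => u ∉ e

/-- The updated game `G^u` after Right has picked `u`. -/
def subR (G : Game) (u : ℕ) : Game where
  V := G.V.erase u
  EL := G.EL.filter fun e => u ∉ e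
  ER := G.ER.image fun e => e.erase u

/-- The updated game `G_u^v` after Left has picked `u` and Right has picked `v`. -/
def updLR (G : Game) (u v : ℕ) : Game where
  V := (G.V.erase u).erase v
  EL := (G.EL.filter fun e => v ∉ e).image fun e => e.erase u
  ER := (G.ER.filter fun e => u ∉ e).image fun e => e.erase v

/-- The disjoint union of two games. -/
def gunion (G G' : Game) : Game where
  V := G.V ∪ G'.V
  EL := G.EL ∪ G'.EL
  ER := G.ER ∪ G'.ER

/-- `Good G T p A B`: when Left has picked `A`, Right has picked `B` and `p` is to move, Left can
force the play to finish in a position satisfying `T`. -/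
inductive Good (G : Game) (T : Finset ℕ → Finset ℕ → Prop) :
    Player → Finset ℕ → Finset ℕ → Prop
  | done {p : Player} {A B : Finset ℕ}
      (h : (fills G.EL A ∨ fills G.ER B) ∨ G.V ⊆ A ∪ B) (hT : T A B) : Good G T p A B
  | left {A B : Finset ℕ} {x : ℕ} (hne : ¬ (fills G.EL A ∨ fills G.ER B)) (hx : x ∈ G.V)
      (hxn : x ∉ A ∪ B) (hg : Good G T .R (insert x A) B) : Good G T .L A B
  | right {A B : Finset ℕ} (hne : ¬ (fills G.EL A ∨ fills G.ER B)) (hnf : ¬ G.V ⊆ A ∪ B)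
      (hg : ∀ x ∈ G.V, x ∉ A ∪ B → Good G T .L A (insert x B)) : Good G T .R A B

theorem fills_mono {E : Finset (Finset ℕ)} {S S' : Finset ℕ} (h : fills E S) (hS : S ⊆ S') :
    fills E S' := by
  obtain ⟨e, he, heS⟩ := h
  exact ⟨e, he, heS.trans hS⟩

section Extra

variable {G : Game} {T : Finset ℕ → Finset ℕ → Prop}

/-- A goal of Left that gets easier when Left has more vertices and Right has fewer. -/
def IsLeftMonotone (T : Finset ℕ → Finset ℕ → Prop) : Prop :=
  ∀ ⦃A A' B B' : Finset ℕ⦄, A ⊆ A' → B' ⊆ B → T A B → T A' B'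

theorem Good.sdiff (hT : IsLeftMonotone T) {p : Player} {A B : Finset ℕ} (h : Good G T p A B)
    (hA : A ⊆ G.V) (hAB : Disjoint A B) : T (G.V \ B) B := by
  induction h with
  | done _ h =>
    refine hT (fun a ha => ?_) subset_rfl h
    exact Finset.mem_sdiff.2 ⟨hA ha, Finset.disjoint_left.1 hAB ha⟩
  | left _ hx hxn _ ih =>
    simp only [Finset.mem_union, not_or] at hxn
    exact ih (Finset.insert_subset hx hA) (Finset.disjoint_insert_left.2 ⟨hxn.2, hAB⟩)
  | @right A B _ hnf _ ih =>
    obtain ⟨x, hx, hxn⟩ := Finset.not_subset.1 hnf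
    have hxA : x ∉ A := fun h => hxn (Finset.mem_union_left _ h)
    exact hT (Finset.sdiff_subset_sdiff subset_rfl (Finset.subset_insert _ _))
      (Finset.subset_insert _ _)
      (ih x hx hxn hA (Finset.disjoint_insert_right.2 ⟨hxA, hAB⟩))

/-- Extra vertices, or the move itself, never hurt Left. -/
theorem Good.extra (hT : IsLeftMonotone T)
    (hE : ∀ A B, fills G.EL A → ¬ fills G.ER B → T A B) {p : Player} {A B : Finset ℕ}
    (h : Good G T p A B) : ∀ A', A ⊆ A' → A' ⊆ G.V → Disjoint A' B →
      Good G T .L A' B ∧ (p = .R → Good G T .R A' B) := by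
  induction h with
  | done h hT' =>
    intro A' hA hV hd
    have hfin := h.imp (Or.imp_left fun h => fills_mono h hA)
      fun h => h.trans (Finset.union_subset_union hA subset_rfl)
    exact ⟨.done hfin (hT hA subset_rfl hT'), fun _ => .done hfin (hT hA subset_rfl hT')⟩
  | @left A B x hne hx hxn hg ih =>
    intro A' hA hV hd
    refine ⟨?_, nofun⟩
    by_cases hne' : fills G.EL A' ∨ fills G.ER B
    · have hB : ¬ fills G.ER B := fun h => hne (.inr h)
      exact .done (.inl hne') (hE _ _ (hne'.resolve_right hB) hB)
    by_cases hxA : x ∈ A'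
    · exact (ih A' (Finset.insert_subset hxA hA) hV hd).1
    · simp only [Finset.mem_union, not_or] at hxn
      refine .left hne' hx (by simp [hxA, hxn.2]) ?_
      exact (ih (insert x A') (Finset.insert_subset_insert _ hA) (Finset.insert_subset hx hV)
        (Finset.disjoint_insert_left.2 ⟨hxn.2, hd⟩)).2 rfl
  | @right A B hne hnf hg ih =>
    have hB : ¬ fills G.ER B := fun h => hne (.inr h)
    have key : ∀ A', A ⊆ A' → A' ⊆ G.V → Disjoint A' B → Good G T .R A' B := by
      intro A' hA hV hd
      by_cases hne' : fills G.EL A' ∨ fills G.ER B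
      · exact .done (.inl hne') (hE _ _ (hne'.resolve_right hB) hB)
      by_cases hf : G.V ⊆ A' ∪ B
      · refine .done (.inr hf) (hT ?_ subset_rfl
          ((Good.right hne hnf hg).sdiff hT (hA.trans hV) (hd.mono_left hA)))
        intro a ha
        rw [Finset.mem_sdiff] at ha
        exact (Finset.mem_union.1 (hf ha.1)).resolve_right ha.2
      refine .right hne' hf fun x hx hxn => ?_
      simp only [Finset.mem_union, not_or] at hxn
      refine (ih x hx ?_ A' hA hV (Finset.disjoint_insert_right.2 ⟨hxn.1, hd⟩)).1
      simp only [Finset.mem_union, not_or]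
      exact ⟨fun h => hxn.1 (hA h), hxn.2⟩
    intro A' hA hV hd
    refine ⟨?_, fun _ => key A' hA hV hd⟩
    cases key A' hA hV hd with
    | done h hT' => exact .done h hT'
    | right hne' hnf' _ =>
      obtain ⟨x, hx, hxn⟩ := Finset.not_subset.1 hnf'
      refine .left hne' hx hxn (key _ (hA.trans (Finset.subset_insert _ _))
        (Finset.insert_subset hx hV) (Finset.disjoint_insert_left.2 ⟨?_, hd⟩))
      exact fun h => hxn (Finset.mem_union_right _ h)

end Extra

section Histories

variable {G : Game} {s p : Player} {σ : Strategy} {h : List ℕ} {x : ℕ}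

theorem mover_succ (s : Player) (i : ℕ) : mover s (i + 1) = (mover s i).other := by
  rcases Nat.mod_two_eq_zero_or_one i with hi | hi <;> cases s <;>
    simp [mover, hi, Nat.add_mod, Player.other]

theorem picked_append (s p : Player) (h : List ℕ) (x : ℕ) :
    picked s p (h ++ [x]) =
      if mover s h.length = p then insert x (picked s p h) else picked s p h := by
  have hcongr : ((Finset.range h.length).filter fun i => mover s i = p).image
      (fun i => (h ++ [x]).getD i 0) = picked s p h := by
    refine Finset.image_congr fun i hi => ?_
    have hi : i < h.length := by simpa using (Finset.mem_filter.1 hi).1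
    exact List.getD_append _ _ _ _ hi
  rw [picked, List.length_append, List.length_singleton, Finset.range_add_one,
    Finset.filter_insert]
  split_ifs with hm
  · rw [Finset.image_insert, hcongr, List.getD_append_right _ _ _ _ le_rfl]
    simp
  · exact hcongr

theorem picked_union (s : Player) (h : List ℕ) : picked s .L h ∪ picked s .R h = h.toFinset := by
  induction h using List.reverseRecOn with
  | nil => rfl
  | append_singleton h x ih =>
    rw [picked_append, picked_append, List.toFinset_append, ← ih]
    ext a
    cases mover s h.length <;> simp

theorem mem_picked_union (s : Player) (h : List ℕ) (x : ℕ) :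
    x ∈ picked s .L h ∪ picked s .R h ↔ x ∈ h := by
  rw [picked_union, List.mem_toFinset]

theorem validHist_append :
    ValidHist G s (h ++ [x]) ↔ ValidHist G s h ∧ ¬ ended G s h ∧ x ∈ G.V ∧ x ∉ h := by
  have hend : (∀ k, k < (h ++ [x]).length → ¬ ended G s ((h ++ [x]).take k)) ↔
      (∀ k, k < h.length → ¬ ended G s (h.take k)) ∧ ¬ ended G s h := by
    rw [List.length_append, List.length_singleton, Nat.forall_lt_succ_right]
    refine and_congr (forall₂_congr fun k hk => ?_) ?_
    · rw [List.take_append_of_le_length hk.le]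
    · rw [List.take_left]
  rw [ValidHist, ValidHist, hend, ← List.concat_eq_append, List.nodup_concat]
  simp only [List.concat_eq_append, List.mem_append, List.mem_singleton, or_imp, forall_and,
    forall_eq]
  tauto

theorem follows_append :
    Follows s p σ (h ++ [x]) ↔ Follows s p σ h ∧ (mover s h.length = p → x = σ h) := by
  rw [Follows, Follows, List.length_append, List.length_singleton, Nat.forall_lt_succ_right]
  refine and_congr (forall₂_congr fun k hk => ?_) ?_
  · rw [List.take_append_of_le_length hk.le, List.getD_append _ _ _ _ hk]
  · rw [List.take_left, List.getD_append_right _ _ _ _ le_rfl]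
    simp

theorem validHist_nil : ValidHist G s [] := by simp [ValidHist]

theorem follows_nil : Follows s p σ [] := by simp [Follows]

theorem ValidHist.length_le (hv : ValidHist G s h) : h.length ≤ G.V.card := by
  rw [← List.toFinset_card_of_nodup hv.1]
  exact Finset.card_le_card fun x hx => hv.2.1 x (List.mem_toFinset.1 hx)

theorem ValidHist.length_eq_iff (hv : ValidHist G s h) :
    h.length = G.V.card ↔ G.V ⊆ picked s .L h ∪ picked s .R h := by
  have hsub : h.toFinset ⊆ G.V := fun x hx => hv.2.1 x (List.mem_toFinset.1 hx)
  rw [picked_union, ← List.toFinset_card_of_nodup hv.1]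
  exact ⟨fun hc => (Finset.eq_of_subset_of_card_le hsub hc.ge).ge,
    fun hs => congrArg Finset.card (hsub.antisymm hs)⟩

end Histories

section Strategies

variable {G : Game} {s : Player} {T : Finset ℕ → Finset ℕ → Prop} {σ : Strategy}

theorem good_of_strategy (hl : Legal G s .L σ)
    (hT : ∀ h, ValidHist G s h → Follows s .L σ h → Complete G s h →
      T (picked s .L h) (picked s .R h)) (h : List ℕ) (hv : ValidHist G s h)
    (hf : Follows s .L σ h) :
    Good G T (mover s h.length) (picked s .L h) (picked s .R h) := by
  by_cases he : ended G s h
  · exact .done (.inl he) (hT h hv hf (.inl he))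
  by_cases hc : h.length = G.V.card
  · exact .done (.inr (hv.length_eq_iff.1 hc)) (hT h hv hf (.inr hc))
  have hlt : h.length < G.V.card := lt_of_le_of_ne hv.length_le hc
  have step : ∀ x ∈ G.V, x ∉ h → (mover s h.length = .L → x = σ h) →
      Good G T (mover s (h ++ [x]).length) (picked s .L (h ++ [x])) (picked s .R (h ++ [x])) :=
    fun x hx hxh hxσ => good_of_strategy hl hT (h ++ [x])
      (validHist_append.2 ⟨hv, he, hx, hxh⟩) (follows_append.2 ⟨hf, hxσ⟩)
  simp only [picked_append, List.length_append, List.length_singleton, mover_succ] at step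
  cases hm : mover s h.length with
  | L =>
    obtain ⟨hx, hxh⟩ := hl h hv hf he hlt hm
    refine .left he hx (by rwa [mem_picked_union]) ?_
    simpa [hm, Player.other] using step _ hx hxh fun _ => rfl
  | R =>
    refine .right he (fun h => hc (hv.length_eq_iff.2 h)) fun x hx hxn => ?_
    rw [mem_picked_union] at hxn
    simpa [hm, Player.other] using step x hx hxn (by simp [hm])
termination_by G.V.card - h.length
decreasing_by simp only [List.length_append, List.length_singleton]; omega

open Classical in
/-- A strategy for Left that moves to a good position whenever there is one. -/
noncomputable def goodStrategy (G : Game) (s : Player) (T : Finset ℕ → Finset ℕ → Prop) :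
    Strategy := fun h =>
  if hx : ∃ x, x ∈ G.V ∧ x ∉ h ∧ Good G T .R (insert x (picked s .L h)) (picked s .R h)
  then hx.choose else 0

theorem goodStrategy_spec {h : List ℕ} (hv : ValidHist G s h) (he : ¬ ended G s h)
    (hlt : h.length ≠ G.V.card) (hg : Good G T .L (picked s .L h) (picked s .R h)) :
    goodStrategy G s T h ∈ G.V ∧ goodStrategy G s T h ∉ h ∧
      Good G T .R (insert (goodStrategy G s T h) (picked s .L h)) (picked s .R h) := by
  have hx : ∃ x, x ∈ G.V ∧ x ∉ h ∧
      Good G T .R (insert x (picked s .L h)) (picked s .R h) := by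
    cases hg with
    | done h' _ => exact absurd h' (not_or.2 ⟨he, fun h => hlt (hv.length_eq_iff.2 h)⟩)
    | left _ hx hxn hg => exact ⟨_, hx, by rwa [mem_picked_union] at hxn, hg⟩
  rw [goodStrategy, dif_pos hx]
  exact hx.choose_spec

theorem good_of_follows (hg : Good G T s ∅ ∅) (h : List ℕ) (hv : ValidHist G s h)
    (hf : Follows s .L (goodStrategy G s T) h) :
    Good G T (mover s h.length) (picked s .L h) (picked s .R h) := by
  induction h using List.reverseRecOn with
  | nil => exact hg
  | append_singleton h x ih =>
    obtain ⟨hv, he, hx, hxh⟩ := validHist_append.1 hv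
    obtain ⟨hf, hxσ⟩ := follows_append.1 hf
    have hgh := ih hv hf
    have hc : h.length ≠ G.V.card := fun hc =>
      hxh ((mem_picked_union s h x).1 (hv.length_eq_iff.1 hc hx))
    simp only [picked_append, List.length_append, List.length_singleton, mover_succ]
    cases hm : mover s h.length with
    | L =>
      rw [hm] at hgh
      simpa [Player.other, hxσ hm] using (goodStrategy_spec hv he hc hgh).2.2
    | R =>
      rw [hm] at hgh
      cases hgh with
      | done h' _ => exact absurd h' (not_or.2 ⟨he, fun h => hc (hv.length_eq_iff.2 h)⟩)
      | right _ _ hg =>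
        simpa [Player.other] using hg x hx (by rwa [mem_picked_union])

/-- Left has a strategy achieving `T` if and only if the starting position is good. -/
theorem exists_strategy_iff_good :
    (∃ σ : Strategy, Legal G s .L σ ∧ ∀ h, ValidHist G s h → Follows s .L σ h →
      Complete G s h → T (picked s .L h) (picked s .R h)) ↔ Good G T s ∅ ∅ := by
  refine ⟨fun ⟨σ, hl, hT⟩ => good_of_strategy hl hT [] validHist_nil follows_nil, fun hg =>
    ⟨goodStrategy G s T, fun h hv hf he hlt hm => ?_, fun h hv hf hc => ?_⟩⟩
  · have hgh := good_of_follows hg h hv hf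
    rw [hm] at hgh
    have := goodStrategy_spec hv he hlt.ne hgh
    exact ⟨this.1, this.2.1⟩
  · have hfin := hc.imp_right hv.length_eq_iff.1
    have hgh := good_of_follows hg h hv hf
    generalize mover s h.length = q at hgh
    cases hgh with
    | done _ hT => exact hT
    | left hne hx hxn _ => exact absurd (hfin.resolve_left hne hx) hxn
    | right hne hnf _ => exact absurd (hfin.resolve_left hne) hnf

theorem exists_strategy_first_of_second (hT : IsLeftMonotone T)
    (hE : ∀ A B, fills G.EL A → ¬ fills G.ER B → T A B)
    (h : ∃ σ : Strategy, Legal G .R .L σ ∧ ∀ h, ValidHist G .R h → Follows .R .L σ h →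
      Complete G .R h → T (picked .R .L h) (picked .R .R h)) :
    ∃ σ : Strategy, Legal G .L .L σ ∧ ∀ h, ValidHist G .L h → Follows .L .L σ h →
      Complete G .L h → T (picked .L .L h) (picked .L .R h) :=
  exists_strategy_iff_good.2 ((exists_strategy_iff_good.1 h).extra hT hE ∅ subset_rfl
    (Finset.empty_subset _) (Finset.disjoint_empty_left _)).1

end Strategies

/-- If Left has a winning (resp. non-losing) strategy on `G` as second player,
then Left has a winning (resp. non-losing) strategy on `G` as first player. -/
theorem second_to_first (G : Game) (hG : WellFormed G) :
    (WinsAs G .R .L → WinsAs G .L .L) ∧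
    (NonLosingAs G .R .L → NonLosingAs G .L .L) := by
  exact ⟨exists_strategy_first_of_second (T := fun A _ => fills G.EL A)
      (fun _ _ _ _ hA _ h => fills_mono h hA) (fun _ _ h _ => h),
    exists_strategy_first_of_second (T := fun _ B => ¬ fills G.ER B)
      (fun _ _ _ _ _ hB h h' => h (fills_mono h' hB)) (fun _ _ _ h => h)⟩
end APG
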